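/- arXiv:1710.02887 — 2 statements merged into one kernel-verified Lean document; each statement's English description precedes it below -/
import Mathlib

section
/- (Taylor consequence of Lemma A.3) There exists a constant K₂ > 0 such that for every θ ∈ [0, θ₀/2), ln E[exp(θ Y)] ≤ θ · E Y + θ² · K₂. -/
open MeasureTheory

/-!
Since `log x ≤ x - 1`, it suffices to bound `E[exp(θY) - 1 - θY]` by `θ² K₂`. The Taylor remainder
satisfies `exp x - 1 - x ≤ x² exp |x|`; for `|θ| ≤ θ₀ / 2` the factor `Y²` is absorbed into the
unused half of the exponential moment, by `u² / 2 ≤ exp u` at `u = θ₀ |Y| / 2`. This gives the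
pointwise bound of `exp_mul_sub_one_sub_le`, and integrating it yields `K₂ = 8 K₁ / θ₀²`.
-/

lemma exp_mul_sub_one_sub_le {θ₀ θ : ℝ} (hθ₀ : 0 < θ₀) (h0 : 0 ≤ θ) (h1 : θ ≤ θ₀ / 2) (y : ℝ) :
    Real.exp (θ * y) - 1 - θ * y ≤
      θ ^ 2 * (8 / θ₀ ^ 2) * (Real.exp (θ₀ * y) + Real.exp (-θ₀ * y)) := by
  have hT : Real.exp (θ * y) - 1 - θ * y ≤ (θ * y) ^ 2 * Real.exp |θ * y| := by
    have h := Complex.norm_exp_sub_sum_le_norm_mul_exp ((θ * y : ℝ) : ℂ) 2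
    simp only [Finset.sum_range_succ, Finset.sum_range_zero] at h
    norm_num only [pow_zero, pow_one, Nat.factorial] at h
    have e : Complex.exp ((θ * y : ℝ) : ℂ) - (1 + ((θ * y : ℝ) : ℂ))
        = ((Real.exp (θ * y) - (1 + θ * y) : ℝ) : ℂ) := by push_cast; ring
    have h' : |Real.exp (θ * y) - (1 + θ * y)| ≤ |θ * y| ^ 2 * Real.exp |θ * y| := by
      rwa [div_one, e, Complex.norm_real, Complex.norm_real, Real.norm_eq_abs,
        Real.norm_eq_abs] at h
    rw [sq_abs] at h'
    linarith [le_abs_self (Real.exp (θ * y) - (1 + θ * y))]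
  set u := θ₀ / 2 * |y| with hu
  have hu0 : 0 ≤ u := by positivity
  have hq : u ^ 2 ≤ 2 * Real.exp u := by
    linarith [Real.quadratic_le_exp_of_nonneg hu0]
  have hθu : |θ * y| ≤ u := by
    rw [abs_mul, abs_of_nonneg h0]
    exact mul_le_mul_of_nonneg_right h1 (abs_nonneg y)
  have hyu : (θ * y) ^ 2 = θ ^ 2 * (4 / θ₀ ^ 2) * u ^ 2 := by
    rw [hu, mul_pow, mul_pow, sq_abs]
    field_simp
    norm_num
  have hcosh : Real.exp u * Real.exp u ≤ Real.exp (θ₀ * y) + Real.exp (-θ₀ * y) := by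
    rw [← Real.exp_add, hu]
    rcases abs_cases y with ⟨h, _⟩ | ⟨h, _⟩ <;> rw [h]
    · rw [show θ₀ / 2 * y + θ₀ / 2 * y = θ₀ * y by ring]
      linarith [Real.exp_pos (-θ₀ * y)]
    · rw [show θ₀ / 2 * -y + θ₀ / 2 * -y = -θ₀ * y by ring]
      linarith [Real.exp_pos (θ₀ * y)]
  calc Real.exp (θ * y) - 1 - θ * y
      ≤ (θ * y) ^ 2 * Real.exp |θ * y| := hT
    _ ≤ θ ^ 2 * (4 / θ₀ ^ 2) * (2 * Real.exp u) * Real.exp u := by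
        rw [hyu]; gcongr
    _ = θ ^ 2 * (8 / θ₀ ^ 2) * (Real.exp u * Real.exp u) := by ring
    _ ≤ _ := by gcongr

/-- (Taylor consequence of Lemma A.3) There exists `K₂ > 0` such that for every
`θ ∈ [0, θ₀/2)`, `ln E[exp(θ Y)] ≤ θ E Y + θ² K₂`. -/
theorem stmt_6 {Ω : Type*} [MeasurableSpace Ω] (μ : Measure Ω) [IsProbabilityMeasure μ]
    (Y : Ω → ℝ) (hY : Measurable Y) (θ₀ K₁ : ℝ) (hθ₀ : 0 < θ₀) (hK₁ : 0 < K₁)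
    (hintPos : Integrable (fun ω => Real.exp (θ₀ * Y ω)) μ)
    (hintNeg : Integrable (fun ω => Real.exp (-θ₀ * Y ω)) μ)
    (hbound : (∫ ω, Real.exp (θ₀ * Y ω) ∂μ) + (∫ ω, Real.exp (-θ₀ * Y ω) ∂μ) ≤ K₁) :
    ∃ K₂ : ℝ, 0 < K₂ ∧ ∀ θ ∈ Set.Ico (0 : ℝ) (θ₀ / 2),
      Real.log (∫ ω, Real.exp (θ * Y ω) ∂μ) ≤ θ * (∫ ω, Y ω ∂μ) + θ ^ 2 * K₂ := by
  refine ⟨8 / θ₀ ^ 2 * K₁, by positivity, fun θ hθ => ?_⟩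
  obtain ⟨h0, h1⟩ := hθ
  have hYint : Integrable Y μ := by
    simpa using ProbabilityTheory.integrable_pow_of_integrable_exp_mul hθ₀.ne' hintPos hintNeg 1
  have hexp : Integrable (fun ω => Real.exp (θ * Y ω)) μ :=
    ProbabilityTheory.integrable_exp_mul_of_nonneg_of_le hintPos h0 (by linarith)
  have hexp1 : Integrable (fun ω => Real.exp (θ * Y ω) - 1) μ := hexp.sub (integrable_const 1)
  have hpos : 0 < ∫ ω, Real.exp (θ * Y ω) ∂μ := integral_exp_pos hexp
  have hlog := Real.log_le_sub_one_of_pos hpos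
  have hI : (∫ ω, (Real.exp (θ * Y ω) - 1 - θ * Y ω) ∂μ) ≤
      ∫ ω, θ ^ 2 * (8 / θ₀ ^ 2) * (Real.exp (θ₀ * Y ω) + Real.exp (-θ₀ * Y ω)) ∂μ :=
    integral_mono (hexp1.sub (hYint.const_mul θ))
      ((hintPos.add hintNeg).const_mul _)
      (fun ω => exp_mul_sub_one_sub_le hθ₀ h0 h1.le (Y ω))
  rw [integral_sub hexp1 (hYint.const_mul θ),
    integral_sub hexp (integrable_const 1), integral_const_mul, integral_const_mul,
    integral_add hintPos hintNeg] at hI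
  simp only [integral_const, probReal_univ, smul_eq_mul, mul_one] at hI
  have hK : θ ^ 2 * (8 / θ₀ ^ 2) *
      ((∫ ω, Real.exp (θ₀ * Y ω) ∂μ) + (∫ ω, Real.exp (-θ₀ * Y ω) ∂μ)) ≤
      θ ^ 2 * (8 / θ₀ ^ 2) * K₁ := by gcongr
  linarith
end

section
/- The function G satisfies lim_{y → 0+} G(y) = −∞; that is, for every R > 0 there exists δ > 0 such that G(y) ≤ −R whenever 0 < y ≤ δ. -/
/-!
A `C¹` function is Lipschitz on the compact interval `[0, h]`, so `g 0 = 0` gives `g z ≤ L z` there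
for some `L > 0`. Hence `∫_y^h dz / g z ≥ L⁻¹ ∫_y^h dz / z = L⁻¹ log (h / y)`, which is at least `R`
as soon as `y ≤ h exp (-L R)`.
-/

/-- For `g ∈ Γ` and `h > 0`, the function `G(y) = −∫_y^h dz / g(z)` satisfies
`lim_{y → 0+} G(y) = −∞`: for every `R > 0` there exists `δ > 0` such that
`G(y) ≤ −R` whenever `0 < y ≤ δ` (and `y` is in the domain `(0, h]`). -/
theorem stmt_9 (g : ℝ → ℝ) (h : ℝ) (hh : 0 < h)
    (hg_cd : ContDiffOn ℝ 1 g (Set.Ici 0))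
    (hg_mono : StrictMonoOn g (Set.Ici 0))
    (hg_nonneg : ∀ y ∈ Set.Ici (0 : ℝ), 0 ≤ g y)
    (hg_zero : ∀ y ∈ Set.Ici (0 : ℝ), (g y = 0 ↔ y = 0)) :
    ∀ R : ℝ, 0 < R → ∃ δ : ℝ, 0 < δ ∧
      ∀ y ∈ Set.Ioc (0 : ℝ) h, y ≤ δ → (-∫ z in y..h, 1 / g z) ≤ -R := by
  intro R hR
  have hg0 : g 0 = 0 := (hg_zero 0 Set.self_mem_Ici).2 rfl
  have hpos : ∀ z, 0 < z → 0 < g z := fun z hz =>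
    lt_of_le_of_ne (hg_nonneg z hz.le) fun h0 => hz.ne' ((hg_zero z hz.le).1 h0.symm)
  obtain ⟨K, hK⟩ := (hg_cd.mono Set.Icc_subset_Ici_self).exists_lipschitzOnWith
    (s := Set.Icc 0 h) one_ne_zero (convex_Icc 0 h) isCompact_Icc
  -- The Lipschitz constant may vanish, so `1` is added to make it a valid divisor.
  obtain ⟨L, hL, hgL⟩ : ∃ L : ℝ, 0 < L ∧ ∀ z ∈ Set.Ioc 0 h, g z ≤ L * z := by
    refine ⟨K + 1, by positivity, fun z hz => ?_⟩
    have := hK.dist_le_mul z ⟨hz.1.le, hz.2⟩ 0 ⟨le_rfl, hh.le⟩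
    rw [hg0, Real.dist_eq, Real.dist_eq, sub_zero, sub_zero, abs_of_pos hz.1] at this
    linarith [le_abs_self (g z), hz.1]
  refine ⟨h * Real.exp (-(L * R)), by positivity, fun y hy hyδ => ?_⟩
  have hy0 : 0 < y := hy.1
  have hsub : Set.uIcc y h ⊆ Set.Ioi 0 := by
    rw [Set.uIcc_of_le hy.2]
    exact fun z hz => hy0.trans_le hz.1
  have hint_g : IntervalIntegrable (fun z => 1 / g z) MeasureTheory.volume y h := by
    apply ContinuousOn.intervalIntegrable
    exact continuousOn_const.div
      (hg_cd.continuousOn.mono (hsub.trans Set.Ioi_subset_Ici_self))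
      fun z hz => (hpos z (hsub hz)).ne'
  have hint_id : IntervalIntegrable (fun z => L⁻¹ * (1 / z)) MeasureTheory.volume y h := by
    apply ContinuousOn.intervalIntegrable
    exact continuousOn_const.mul
      (continuousOn_const.div continuousOn_id fun z hz => (hsub hz).ne')
  have hle : ∫ z in y..h, L⁻¹ * (1 / z) ≤ ∫ z in y..h, 1 / g z := by
    refine intervalIntegral.integral_mono_on hy.2 hint_id hint_g fun z hz => ?_
    have hz0 : 0 < z := hy0.trans_le hz.1
    calc L⁻¹ * (1 / z) = 1 / (L * z) := by field_simp
      _ ≤ 1 / g z := one_div_le_one_div_of_le (hpos z hz0) (hgL z ⟨hz0, hz.2⟩)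
  rw [intervalIntegral.integral_const_mul, integral_one_div_of_pos hy0 hh] at hle
  have hlog : L * R ≤ Real.log (h / y) := by
    rw [Real.le_log_iff_exp_le (by positivity), le_div_iff₀ hy0]
    calc Real.exp (L * R) * y ≤ Real.exp (L * R) * (h * Real.exp (-(L * R))) := by gcongr
      _ = h := by rw [Real.exp_neg]; field_simp
  have hR' : R ≤ L⁻¹ * Real.log (h / y) := by
    rwa [inv_mul_eq_div, le_div_iff₀ hL, mul_comm]
  linarith
end
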